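/- Let f : ℝⁿ → ℝⁿ be continuously differentiable and let u be a bounded weak solution of u_t + f(u)_x = 0 on an open set Ω ⊆ ℝ × ℝ, i.e. u ∈ L^∞(Ω;ℝⁿ) and ∫∫_Ω ( u·φ_t + f(u)·φ_x ) dx dt = 0 for every φ ∈ C¹_c(Ω). Suppose u has an approximate jump at a point (τ,ξ) ∈ Ω, with left and right states u⁻ ≠ u⁺ and speed λ. Then the Rankine–Hugoniot equations hold: λ·(u⁺ − u⁻) = f(u⁺) − f(u⁻). -/

import Mathlib

open MeasureTheory Filter Set Topology

noncomputable section

/-- Partial derivative of a test function in the time variable. -/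
def ptime (φ : ℝ × ℝ → ℝ) (p : ℝ × ℝ) : ℝ := deriv (fun s => φ (s, p.2)) p.1

/-- Partial derivative of a test function in the space variable. -/
def pspace (φ : ℝ × ℝ → ℝ) (p : ℝ × ℝ) : ℝ := deriv (fun y => φ (p.1, y)) p.2

/-!
Blowing up at the jump point turns the weak solution into a family of weak solutions on the unit
ball that converges in `L¹` to the traveling jump `U`, while the fluxes converge to `f ∘ U`, because
`f` is continuous at both states and the fluxes stay bounded. The weak formulation passes to the
limit. Since `U` and `f ∘ U` are constant along `(1, λ)`, integrating by parts in that direction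
turns the time derivative into `-λ` times the space derivative, and both terms become multiples of
the integral of the test function along the line `x = λ t`.
-/

open Metric Module
open scoped ENNReal NNReal

section LOneConvergence

variable {α ι E : Type*} [MeasurableSpace α] {μ : Measure α} {l : Filter ι}
  [NormedAddCommGroup E]

lemma tendsto_lintegral_zero_of_le_add_mul [IsFiniteMeasure μ] {d e : ι → α → ℝ≥0∞}
    (hd : Tendsto (fun i => ∫⁻ x, d i x ∂μ) l (𝓝 0))
    (hed : ∀ ε : ℝ≥0, 0 < ε → ∃ K : ℝ≥0, ∀ᶠ i in l, ∀ᵐ x ∂μ, e i x ≤ ε + K * d i x) :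
    Tendsto (fun i => ∫⁻ x, e i x ∂μ) l (𝓝 0) := by
  refine ENNReal.tendsto_nhds_zero.2 fun η hη => ?_
  obtain ⟨ε, hε, hεη⟩ : ∃ ε : ℝ≥0, 0 < ε ∧ ε * μ univ < η :=
    ENNReal.exists_nnreal_pos_mul_lt (measure_ne_top μ univ) hη.ne'
  obtain ⟨K, hK⟩ := hed ε hε
  have hbound : Tendsto (fun i => ε * μ univ + K * ∫⁻ x, d i x ∂μ) l (𝓝 (ε * μ univ)) := by
    simpa only [mul_zero, add_zero] using
      (ENNReal.Tendsto.const_mul hd (.inr ENNReal.coe_ne_top)).const_add (ε * μ univ)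
  filter_upwards [hK, hbound.eventually_lt_const hεη] with i hi hlt
  calc ∫⁻ x, e i x ∂μ
      ≤ ∫⁻ x, (ε + K * d i x) ∂μ := lintegral_mono_ae hi
    _ = ε * μ univ + K * ∫⁻ x, d i x ∂μ := by
      rw [lintegral_add_left measurable_const, lintegral_const,
        lintegral_const_mul' _ _ ENNReal.coe_ne_top]
    _ ≤ η := hlt.le

lemma eventually_integrable_of_tendsto_lintegral_enorm_sub {u : ι → α → E} {u₀ : α → E}
    (hu₀ : Integrable u₀ μ) (hu : ∀ᶠ i in l, AEStronglyMeasurable (u i) μ)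
    (hlim : Tendsto (fun i => ∫⁻ x, ‖u i x - u₀ x‖ₑ ∂μ) l (𝓝 0)) :
    ∀ᶠ i in l, Integrable (u i) μ := by
  filter_upwards [hu, hlim.eventually_lt_const ENNReal.zero_lt_top] with i hi hfin
  have hdiff : Integrable (u i - u₀) μ := ⟨hi.sub hu₀.aestronglyMeasurable, hfin⟩
  simpa only [sub_add_cancel] using hdiff.add hu₀

lemma tendsto_integral_smul_of_tendsto_lintegral_enorm_sub [NormedSpace ℝ E] {a : α → ℝ}
    (ha : MemLp a ∞ μ) {u : ι → α → E} {u₀ : α → E} (hu₀ : AEStronglyMeasurable u₀ μ)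
    (hu : ∀ᶠ i in l, Integrable (u i) μ)
    (hlim : Tendsto (fun i => ∫⁻ x, ‖u i x - u₀ x‖ₑ ∂μ) l (𝓝 0)) :
    Tendsto (fun i => ∫ x, a x • u i x ∂μ) l (𝓝 (∫ x, a x • u₀ x ∂μ)) := by
  refine tendsto_integral_of_L1 (fun x => a x • u₀ x) (ha.aestronglyMeasurable.smul hu₀)
    (hu.mono fun i hi => hi.smul_of_top_right ha) ?_
  have hbound := ENNReal.Tendsto.const_mul hlim (.inr ha.eLpNorm_ne_top)
  rw [mul_zero] at hbound
  refine tendsto_of_tendsto_of_tendsto_of_le_of_le tendsto_const_nhds hbound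
    (fun _ => zero_le) fun i => ?_
  rw [← lintegral_const_mul' _ _ ha.eLpNorm_ne_top]
  refine lintegral_mono_ae ?_
  filter_upwards [ae_le_eLpNormEssSup (f := a) (μ := μ)] with x hx
  rw [← smul_sub, enorm_smul, eLpNorm_exponent_top]
  gcongr

end LOneConvergence

lemma integrableOn_ball_of_locallyIntegrable {X E : Type*} [PseudoMetricSpace X] [ProperSpace X]
    [MeasurableSpace X] [NormedAddCommGroup E] {μ : Measure X} {u : X → E}
    (hu : LocallyIntegrable u μ) (x : X) (r : ℝ) : IntegrableOn u (ball x r) μ :=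
  (hu.integrableOn_isCompact (isCompact_closedBall x r)).mono_set ball_subset_closedBall

lemma memLp_top_comp_of_continuous {α E F : Type*} [MeasurableSpace α] {μ : Measure α}
    [NormedAddCommGroup E] [ProperSpace E] [NormedAddCommGroup F] {f : E → F} {u : α → E}
    (hf : Continuous f) (hu : MemLp u ∞ μ) : MemLp (f ∘ u) ∞ μ := by
  obtain ⟨C, hC⟩ := (isCompact_closedBall 0 (eLpNorm u ∞ μ).toReal).exists_bound_of_continuousOn
    hf.continuousOn
  refine memLp_top_of_bound (hf.comp_aestronglyMeasurable hu.aestronglyMeasurable) C ?_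
  filter_upwards [ae_le_eLpNormEssSup (f := u) (μ := μ)] with x hx
  rw [← eLpNorm_exponent_top] at hx
  refine hC _ (mem_closedBall_zero_iff.2 ?_)
  simpa only [toReal_enorm] using ENNReal.toReal_mono hu.eLpNorm_ne_top hx

lemma exists_enorm_sub_le_add_mul_of_continuousAt {E F : Type*} [NormedAddCommGroup E]
    [NormedAddCommGroup F] {f : E → F} {v : E} (hf : ContinuousAt f v) (C : ℝ≥0) {ε : ℝ≥0}
    (hε : 0 < ε) : ∃ K : ℝ≥0, ∀ x, ‖f x‖ₑ ≤ C → ‖f x - f v‖ₑ ≤ ε + K * ‖x - v‖ₑ := by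
  obtain ⟨δ, hδ, hnear⟩ := Metric.continuousAt_iff.1 hf ε hε
  lift δ to ℝ≥0 using hδ.le
  refine ⟨(C + ‖f v‖₊) / δ, fun x hx => ?_⟩
  suffices h : ‖f x - f v‖₊ ≤ ε + (C + ‖f v‖₊) / δ * ‖x - v‖₊ by
    simp only [enorm_eq_nnnorm]
    exact_mod_cast h
  rcases lt_or_ge ‖x - v‖₊ δ with hclose | hfar
  · have hfx : ‖f x - f v‖₊ < ε :=
      (dist_eq_norm (f x) (f v)).symm.trans_lt (hnear ((dist_eq_norm x v).trans_lt hclose))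
    exact hfx.le.trans le_self_add
  · calc ‖f x - f v‖₊
        ≤ ‖f x‖₊ + ‖f v‖₊ := nnnorm_sub_le _ _
      _ ≤ C + ‖f v‖₊ := by gcongr; exact_mod_cast hx
      _ = (C + ‖f v‖₊) / δ * δ := (div_mul_cancel₀ _ (ne_of_gt (NNReal.coe_pos.1 hδ))).symm
      _ ≤ (C + ‖f v‖₊) / δ * ‖x - v‖₊ := by gcongr
      _ ≤ ε + (C + ‖f v‖₊) / δ * ‖x - v‖₊ := le_add_self

section Dilation

variable {V : Type*} [NormedAddCommGroup V] [NormedSpace ℝ V]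

lemma eventually_mapsTo_const_add_smul_unitBall {Ω : Set V} {p : V} (hΩ : Ω ∈ 𝓝 p) :
    ∀ᶠ r : ℝ in 𝓝[>] 0, MapsTo (fun q => p + r • q) (ball 0 1) Ω := by
  obtain ⟨ε, hε, hball⟩ := Metric.mem_nhds_iff.1 hΩ
  filter_upwards [Ioo_mem_nhdsGT hε] with r hr q hq
  apply hball
  rw [mem_ball_zero_iff] at hq
  rw [mem_ball_iff_norm, add_sub_cancel_left, norm_smul, Real.norm_of_nonneg hr.1.le]
  nlinarith [hr.1, hr.2]

variable [MeasurableSpace V] [BorelSpace V] [FiniteDimensional ℝ V] (μ : Measure V)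
  [μ.IsAddHaarMeasure]

lemma quasiMeasurePreserving_const_add_smul (p : V) {r : ℝ} (hr : r ≠ 0) :
    Measure.QuasiMeasurePreserving (fun q => p + r • q) μ μ := by
  refine (measurePreserving_add_left μ p).quasiMeasurePreserving.comp ⟨measurable_const_smul r, ?_⟩
  rw [Measure.map_addHaar_smul μ hr]
  exact Measure.smul_absolutelyContinuous

lemma eventually_quasiMeasurePreserving_const_add_smul_unitBall {Ω : Set V} {p : V}
    (hΩ : Ω ∈ 𝓝 p) :
    ∀ᶠ r : ℝ in 𝓝[>] 0, Measure.QuasiMeasurePreserving (fun q => p + r • q)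
      (μ.restrict (ball 0 1)) (μ.restrict Ω) := by
  filter_upwards [self_mem_nhdsWithin, eventually_mapsTo_const_add_smul_unitBall hΩ] with r hr hmaps
  exact (quasiMeasurePreserving_const_add_smul μ p hr.out.ne').restrict hmaps

lemma setLIntegral_comp_smul_unitBall (G : V → ℝ≥0∞) {r : ℝ} (hr : 0 < r) :
    ∫⁻ q in ball 0 1, G (r • q) ∂μ
      = ENNReal.ofReal (r ^ finrank ℝ V)⁻¹ * ∫⁻ y in ball 0 r, G y ∂μ := by
  have hemb : MeasurableEmbedding fun q : V => r • q :=
    (Homeomorph.smulOfNeZero r hr.ne').measurableEmbedding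
  have hpre : (fun q : V => r • q) ⁻¹' ball 0 r = ball 0 1 := by
    ext q; simp [norm_smul, abs_of_pos hr, hr]
  rw [← hpre, ← hemb.lintegral_map, ← hemb.restrict_map, Measure.map_addHaar_smul μ hr.ne',
    Measure.restrict_smul, lintegral_smul_measure, abs_of_pos (by positivity), smul_eq_mul]

lemma integral_fderiv_smul_eq_zero_of_invariant {E : Type*} [NormedAddCommGroup E]
    [NormedSpace ℝ E] {φ : V → ℝ} {w : V → E} {v : V} (hφ : ContDiff ℝ 1 φ)
    (hφc : HasCompactSupport φ) (hw : LocallyIntegrable w μ)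
    (hinv : ∀ x (t : ℝ), w (x + t • v) = w x) :
    ∫ x, fderiv ℝ φ x v • w x ∂μ = 0 := by
  have hparts := integral_bilinear_hasLineDerivAt_right_eq_neg_left_of_integrable
    (B := ContinuousLinearMap.lsmul ℝ ℝ) (f := φ) (g := w) (g' := fun _ => 0) (v := v) (μ := μ)
    (hw.integrable_smul_left_of_hasCompactSupport
      ((hφ.continuous_fderiv one_ne_zero).clm_apply continuous_const) (hφc.fderiv_apply ℝ v))
    (by simp) (hw.integrable_smul_left_of_hasCompactSupport hφ.continuous hφc)
    (fun x _ => (hφ.differentiable one_ne_zero x).hasFDerivAt.hasLineDerivAt v)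
    (fun x _ => by simpa only [HasLineDerivAt, hinv] using hasDerivAt_const (0 : ℝ) (w x))
  simpa using hparts

end Dilation

section PartialDerivatives

variable {φ : ℝ × ℝ → ℝ}

lemma ptime_eq_fderiv {p : ℝ × ℝ} (hφ : DifferentiableAt ℝ φ p) :
    ptime φ p = fderiv ℝ φ p (1, 0) :=
  (hφ.hasFDerivAt.comp_hasDerivAt p.1 ((hasDerivAt_id p.1).prodMk (hasDerivAt_const p.1 p.2))).deriv

lemma pspace_eq_fderiv {p : ℝ × ℝ} (hφ : DifferentiableAt ℝ φ p) :
    pspace φ p = fderiv ℝ φ p (0, 1) :=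
  (hφ.hasFDerivAt.comp_hasDerivAt p.2 ((hasDerivAt_const p.2 p.1).prodMk (hasDerivAt_id p.2))).deriv

lemma continuous_ptime (hφ : ContDiff ℝ 1 φ) : Continuous (ptime φ) := by
  simpa only [funext fun p => ptime_eq_fderiv (hφ.differentiable one_ne_zero p)] using
    (hφ.continuous_fderiv one_ne_zero).clm_apply continuous_const

lemma continuous_pspace (hφ : ContDiff ℝ 1 φ) : Continuous (pspace φ) := by
  simpa only [funext fun p => pspace_eq_fderiv (hφ.differentiable one_ne_zero p)] using
    (hφ.continuous_fderiv one_ne_zero).clm_apply continuous_const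

lemma ptime_eq_zero_of_notMem_tsupport {p : ℝ × ℝ} (hp : p ∉ tsupport φ) : ptime φ p = 0 := by
  have hzero : φ =ᶠ[𝓝 p] 0 := notMem_tsupport_iff_eventuallyEq.1 hp
  have hslice : (fun s => φ (s, p.2)) =ᶠ[𝓝 p.1] fun _ => 0 :=
    (Continuous.prodMk_left p.2).continuousAt.eventually hzero
  rw [ptime, hslice.deriv_eq, deriv_const]

lemma pspace_eq_zero_of_notMem_tsupport {p : ℝ × ℝ} (hp : p ∉ tsupport φ) : pspace φ p = 0 := by
  have hzero : φ =ᶠ[𝓝 p] 0 := notMem_tsupport_iff_eventuallyEq.1 hp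
  have hslice : (fun y => φ (p.1, y)) =ᶠ[𝓝 p.2] fun _ => 0 :=
    (Continuous.prodMk_right p.1).continuousAt.eventually hzero
  rw [pspace, hslice.deriv_eq, deriv_const]

lemma hasCompactSupport_ptime (hφ : HasCompactSupport φ) : HasCompactSupport (ptime φ) :=
  hφ.mono' fun _ hp => by_contra fun h => hp (ptime_eq_zero_of_notMem_tsupport h)

lemma hasCompactSupport_pspace (hφ : HasCompactSupport φ) : HasCompactSupport (pspace φ) :=
  hφ.mono' fun _ hp => by_contra fun h => hp (pspace_eq_zero_of_notMem_tsupport h)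

lemma integrable_ptime_smul {E : Type*} [NormedAddCommGroup E] [NormedSpace ℝ E] {u : ℝ × ℝ → E}
    (hφ : ContDiff ℝ 1 φ) (hφc : HasCompactSupport φ) (hu : LocallyIntegrable u) :
    Integrable fun q => ptime φ q • u q :=
  hu.integrable_smul_left_of_hasCompactSupport (continuous_ptime hφ) (hasCompactSupport_ptime hφc)

lemma integrable_pspace_smul {E : Type*} [NormedAddCommGroup E] [NormedSpace ℝ E] {u : ℝ × ℝ → E}
    (hφ : ContDiff ℝ 1 φ) (hφc : HasCompactSupport φ) (hu : LocallyIntegrable u) :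
    Integrable fun q => pspace φ q • u q :=
  hu.integrable_smul_left_of_hasCompactSupport (continuous_pspace hφ)
    (hasCompactSupport_pspace hφc)

lemma ptime_comp_smul_neg_add (φ : ℝ × ℝ → ℝ) (a : ℝ) (p x : ℝ × ℝ) :
    ptime (fun y => φ (a • (-p + y))) x = a * ptime φ (a • (-p + x)) :=
  (deriv_comp_const_add (fun s => φ (a * s, a * (-p.2 + x.2))) (-p.1) x.1).trans
    (deriv_comp_mul_left a (fun s => φ (s, a * (-p.2 + x.2))) (-p.1 + x.1))

lemma pspace_comp_smul_neg_add (φ : ℝ × ℝ → ℝ) (a : ℝ) (p x : ℝ × ℝ) :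
    pspace (fun y => φ (a • (-p + y))) x = a * pspace φ (a • (-p + x)) :=
  (deriv_comp_const_add (fun s => φ (a * (-p.1 + x.1), a * s)) (-p.2) x.2).trans
    (deriv_comp_mul_left a (fun s => φ (a * (-p.1 + x.1), s)) (-p.2 + x.2))

end PartialDerivatives

section WeakConservationLaw

variable {E : Type*} [NormedAddCommGroup E] [NormedSpace ℝ E]

/-- The conservation law `∂ₜ u + ∂ₓ g = 0` on `Ω` in the weak sense. The flux is a field `g` of its
own rather than `f ∘ u`: this makes the condition linear, hence stable under `L¹` limits. -/
def IsWeakConservationLaw (Ω : Set (ℝ × ℝ)) (u g : ℝ × ℝ → E) : Prop :=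
  ∀ φ : ℝ × ℝ → ℝ, ContDiff ℝ 1 φ → HasCompactSupport φ → tsupport φ ⊆ Ω →
    ∫ p : ℝ × ℝ, (ptime φ p • u p + pspace φ p • g p) = 0

namespace IsWeakConservationLaw

variable {Ω : Set (ℝ × ℝ)} {u g : ℝ × ℝ → E}

lemma mono {Ω' : Set (ℝ × ℝ)} (h : IsWeakConservationLaw Ω u g) (hΩ : Ω' ⊆ Ω) :
    IsWeakConservationLaw Ω' u g :=
  fun φ hφ hφc hφs => h φ hφ hφc (hφs.trans hΩ)

lemma comp_const_add_smul (h : IsWeakConservationLaw Ω u g) (p : ℝ × ℝ) {r : ℝ} (hr : r ≠ 0) :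
    IsWeakConservationLaw ((fun q => p + r • q) ⁻¹' Ω)
      (fun q => u (p + r • q)) (fun q => g (p + r • q)) := by
  intro φ hφ hφc hφΩ
  let dilation : ℝ × ℝ ≃ₜ ℝ × ℝ := (Homeomorph.smulOfNeZero r hr).trans (Homeomorph.addLeft p)
  let ψ : ℝ × ℝ → ℝ := fun y => φ (r⁻¹ • (-p + y))
  have hψs : tsupport ψ ⊆ Ω := by
    refine (tsupport_comp_eq_preimage φ dilation.symm).trans_subset fun y hy => ?_
    have hmem : dilation (dilation.symm y) ∈ Ω := hφΩ hy
    rwa [dilation.apply_symm_apply] at hmem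
  have hψ := h ψ (hφ.comp (by fun_prop)) (hφc.comp_homeomorph dilation.symm) hψs
  let R : ℝ × ℝ → E := fun y => ptime ψ y • u y + pspace ψ y • g y
  have hR : ∫ q, R (p + r • q) = 0 := by
    rw [Measure.integral_comp_smul volume (fun y => R (p + y)) r, integral_add_left_eq_self R p, hψ,
      smul_zero]
  have hRφ : ∀ q, R (p + r • q)
      = r⁻¹ • (ptime φ q • u (p + r • q) + pspace φ q • g (p + r • q)) := fun q => by
    rw [smul_add, ← mul_smul, ← mul_smul]
    simp only [R, ψ, ptime_comp_smul_neg_add, pspace_comp_smul_neg_add, neg_add_cancel_left,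
      inv_smul_smul₀ hr]
  simp only [hRφ, integral_smul] at hR
  exact (smul_eq_zero.1 hR).resolve_left (inv_ne_zero hr)

lemma of_tendsto {ι : Type*} {l : Filter ι} [l.NeBot] {uᵢ gᵢ : ι → ℝ × ℝ → E}
    (hlaw : ∀ᶠ i in l, IsWeakConservationLaw Ω (uᵢ i) (gᵢ i))
    (hu : IntegrableOn u Ω) (hg : IntegrableOn g Ω)
    (huᵢ : ∀ᶠ i in l, AEStronglyMeasurable (uᵢ i) (volume.restrict Ω))
    (hgᵢ : ∀ᶠ i in l, AEStronglyMeasurable (gᵢ i) (volume.restrict Ω))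
    (hulim : Tendsto (fun i => ∫⁻ q in Ω, ‖uᵢ i q - u q‖ₑ) l (𝓝 0))
    (hglim : Tendsto (fun i => ∫⁻ q in Ω, ‖gᵢ i q - g q‖ₑ) l (𝓝 0)) :
    IsWeakConservationLaw Ω u g := by
  intro φ hφ hφc hφΩ
  have ht : MemLp (ptime φ) ∞ (volume.restrict Ω) :=
    ((continuous_ptime hφ).memLp_of_hasCompactSupport (hasCompactSupport_ptime hφc)).restrict Ω
  have hx : MemLp (pspace φ) ∞ (volume.restrict Ω) :=
    ((continuous_pspace hφ).memLp_of_hasCompactSupport (hasCompactSupport_pspace hφc)).restrict Ω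
  have integral_split : ∀ {v w : ℝ × ℝ → E}, IntegrableOn v Ω → IntegrableOn w Ω →
      ∫ q, (ptime φ q • v q + pspace φ q • w q)
        = (∫ q in Ω, ptime φ q • v q) + ∫ q in Ω, pspace φ q • w q := fun hv hw => by
    rw [← integral_add (by exact hv.smul_of_top_right ht) (by exact hw.smul_of_top_right hx)]
    refine (setIntegral_eq_integral_of_forall_compl_eq_zero fun q hq => ?_).symm
    rw [ptime_eq_zero_of_notMem_tsupport fun h => hq (hφΩ h),
      pspace_eq_zero_of_notMem_tsupport fun h => hq (hφΩ h), zero_smul, zero_smul, add_zero]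
  have huInt := eventually_integrable_of_tendsto_lintegral_enorm_sub hu huᵢ hulim
  have hgInt := eventually_integrable_of_tendsto_lintegral_enorm_sub hg hgᵢ hglim
  have hlim := (tendsto_integral_smul_of_tendsto_lintegral_enorm_sub ht hu.aestronglyMeasurable
    huInt hulim).add (tendsto_integral_smul_of_tendsto_lintegral_enorm_sub hx
    hg.aestronglyMeasurable hgInt hglim)
  rw [← integral_split hu hg] at hlim
  refine tendsto_nhds_unique_of_eventuallyEq hlim tendsto_const_nhds ?_
  filter_upwards [hlaw, huInt, hgInt] with i hi hui hgi
  exact (integral_split hui hgi).symm.trans (hi φ hφ hφc hφΩ)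

end IsWeakConservationLaw

end WeakConservationLaw

section TravelingJump

variable {E F : Type*}

/-- The pure jump traveling along the line `x = c t`, with state `v` on its left and `w` on its
right. On the line itself, a null set, the value is `w`. -/
def travelingJump (v w : E) (c : ℝ) (q : ℝ × ℝ) : E := if q.2 < c * q.1 then v else w

lemma travelingJump_smul (v w : E) (c : ℝ) {r : ℝ} (hr : 0 < r) (q : ℝ × ℝ) :
    travelingJump v w c (r • q) = travelingJump v w c q := by
  have hside : r * q.2 < c * (r * q.1) ↔ q.2 < c * q.1 := by
    rw [mul_left_comm, mul_lt_mul_iff_right₀ hr]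
  simp only [travelingJump, Prod.smul_fst, Prod.smul_snd, smul_eq_mul, hside]

lemma travelingJump_add_smul (v w : E) (c : ℝ) (q : ℝ × ℝ) (t : ℝ) :
    travelingJump v w c (q + t • (1, c)) = travelingJump v w c q := by
  have hside : q.2 + t * c < c * (q.1 + t * 1) ↔ q.2 < c * q.1 := by
    rw [mul_add, mul_one, mul_comm t c, add_lt_add_iff_right]
  simp only [travelingJump, Prod.fst_add, Prod.snd_add, Prod.smul_mk, smul_eq_mul, hside]

lemma comp_travelingJump (f : E → F) (v w : E) (c : ℝ) (q : ℝ × ℝ) :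
    f (travelingJump v w c q) = travelingJump (f v) (f w) c q :=
  apply_ite f _ _ _

variable [NormedAddCommGroup E]

lemma stronglyMeasurable_travelingJump (v w : E) (c : ℝ) :
    StronglyMeasurable (travelingJump v w c) :=
  .ite (measurableSet_lt measurable_snd (measurable_fst.const_mul c))
    stronglyMeasurable_const stronglyMeasurable_const

lemma locallyIntegrable_travelingJump (v w : E) (c : ℝ) :
    LocallyIntegrable (travelingJump v w c) := by
  refine (memLp_top_of_bound (stronglyMeasurable_travelingJump v w c).aestronglyMeasurable
    (max ‖v‖ ‖w‖) (ae_of_all _ fun q => ?_)).locallyIntegrable le_top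
  rw [travelingJump]
  split_ifs
  exacts [le_max_left _ _, le_max_right _ _]

variable [NormedSpace ℝ E] [CompleteSpace E]

lemma integral_deriv_smul_ite_lt {b : ℝ → ℝ} (hb : ContDiff ℝ 1 b) (hbc : HasCompactSupport b)
    (s : ℝ) (v w : E) :
    ∫ y, deriv b y • (if y < s then v else w) = b s • (v - w) := by
  have hint : Integrable (deriv b) :=
    (hb.continuous_deriv le_rfl).integrable_of_hasCompactSupport hbc.deriv
  have hsplit : ∀ y, deriv b y • (if y < s then v else w)
      = (Iio s).indicator (deriv b) y • (v - w) + deriv b y • w := fun y => by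
    by_cases hy : y < s
    · simp [hy, smul_sub]
    · simp [hy]
  have hleft : ∫ y, (Iio s).indicator (deriv b) y = b s := by
    rw [integral_indicator measurableSet_Iio, ← integral_Iic_eq_integral_Iio,
      hbc.integral_Iic_deriv_eq hb]
  have htotal : ∫ y, deriv b y = 0 :=
    integral_eq_zero_of_hasDerivAt_of_integrable
      (fun y => (hb.differentiable one_ne_zero y).hasDerivAt) hint
      (hb.continuous.integrable_of_hasCompactSupport hbc)
  simp only [hsplit]
  rw [integral_add ((hint.indicator measurableSet_Iio).smul_const _) (hint.smul_const _),
    integral_smul_const, integral_smul_const, hleft, htotal, zero_smul, add_zero]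

variable {φ : ℝ × ℝ → ℝ}

lemma integral_pspace_smul_travelingJump (hφ : ContDiff ℝ 1 φ) (hφc : HasCompactSupport φ)
    (v w : E) (c : ℝ) :
    ∫ q, pspace φ q • travelingJump v w c q = (∫ t, φ (t, c * t)) • (v - w) := by
  have hint := integrable_pspace_smul hφ hφc (locallyIntegrable_travelingJump v w c)
  rw [Measure.volume_eq_prod, integral_prod _ hint, ← integral_smul_const]
  refine integral_congr_ae (ae_of_all _ fun t => ?_)
  have hslice : IsClosedEmbedding fun x : ℝ => (t, x) :=
    Function.LeftInverse.isClosedEmbedding (f := Prod.snd) (fun _ => rfl) continuous_snd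
      (.prodMk_right t)
  exact integral_deriv_smul_ite_lt (hφ.comp (contDiff_prodMk_right t))
    (hφc.comp_isClosedEmbedding hslice) (c * t) v w

lemma integral_ptime_smul_travelingJump (hφ : ContDiff ℝ 1 φ) (hφc : HasCompactSupport φ)
    (v w : E) (c : ℝ) :
    ∫ q, ptime φ q • travelingJump v w c q = -(c • (∫ t, φ (t, c * t)) • (v - w)) := by
  have hJ := locallyIntegrable_travelingJump v w c
  have htime := integrable_ptime_smul hφ hφc hJ
  have hspace := integrable_pspace_smul hφ hφc hJ
  have hsplit : ∀ q, fderiv ℝ φ q (1, c) = ptime φ q + c * pspace φ q := fun q => by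
    have hφq := hφ.differentiable one_ne_zero q
    have hdir : ((1, c) : ℝ × ℝ) = (1, 0) + c • (0, 1) := by simp
    rw [ptime_eq_fderiv hφq, pspace_eq_fderiv hφq, hdir, map_add, map_smul, smul_eq_mul]
  have halong := integral_fderiv_smul_eq_zero_of_invariant volume hφ hφc hJ
    (travelingJump_add_smul v w c)
  simp only [hsplit, add_smul, mul_smul] at halong
  rw [integral_add htime (by exact hspace.smul c), integral_smul,
    integral_pspace_smul_travelingJump hφ hφc] at halong
  exact eq_neg_of_add_eq_zero_left halong

end TravelingJump

lemma exists_contDiff_integral_line_pos {Ω : Set (ℝ × ℝ)} (hΩ : Ω ∈ 𝓝 0) (c : ℝ) :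
    ∃ φ : ℝ × ℝ → ℝ, ContDiff ℝ 1 φ ∧ HasCompactSupport φ ∧ tsupport φ ⊆ Ω ∧
      0 < ∫ t, φ (t, c * t) := by
  obtain ⟨φ, hφΩ, hφc, hφ, hrange, hone⟩ := exists_contDiff_tsupport_subset (n := 1) hΩ
  have hnonneg : ∀ q, 0 ≤ φ q := fun q => (hrange ⟨q, rfl⟩).1
  refine ⟨φ, hφ, hφc, hφΩ, ?_⟩
  have hline : IsClosedEmbedding fun t : ℝ => (t, c * t) :=
    Function.LeftInverse.isClosedEmbedding (f := Prod.fst) (fun _ => rfl) continuous_fst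
      (by fun_prop)
  refine Continuous.integral_pos_of_hasCompactSupport_nonneg_nonzero (x := (0 : ℝ))
    (hφ.continuous.comp hline.continuous) (hφc.comp_isClosedEmbedding hline)
    (fun t => hnonneg _) ?_
  rw [mul_zero, Prod.mk_zero_zero, hone]
  exact one_ne_zero

namespace IsWeakConservationLaw

lemma rankine_hugoniot_travelingJump {E : Type*} [NormedAddCommGroup E] [NormedSpace ℝ E]
    [CompleteSpace E] {Ω : Set (ℝ × ℝ)} (hΩ : Ω ∈ 𝓝 0) {v w v' w' : E} {c : ℝ}
    (h : IsWeakConservationLaw Ω (travelingJump v w c) (travelingJump v' w' c)) :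
    c • (w - v) = w' - v' := by
  obtain ⟨φ, hφ, hφc, hφΩ, hpos⟩ := exists_contDiff_integral_line_pos hΩ c
  have htime := integrable_ptime_smul hφ hφc (locallyIntegrable_travelingJump v w c)
  have hspace := integrable_pspace_smul hφ hφc (locallyIntegrable_travelingJump v' w' c)
  have hlaw := h φ hφ hφc hφΩ
  rw [integral_add htime hspace, integral_ptime_smul_travelingJump hφ hφc,
    integral_pspace_smul_travelingJump hφ hφc, smul_comm, neg_add_eq_zero] at hlaw
  have hneg := smul_right_injective E hpos.ne' hlaw
  simpa only [← smul_neg, neg_sub] using congrArg Neg.neg hneg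

end IsWeakConservationLaw

section ApproximateJump

variable {E F : Type*} [NormedAddCommGroup E] [NormedAddCommGroup F] {u : ℝ × ℝ → E} {p : ℝ × ℝ}
  {v w : E} {c : ℝ} {Ω : Set (ℝ × ℝ)}

/-- `u` has an approximate jump at `p`, with left state `v`, right state `w` and speed `c`: the
blow-ups of `u` at `p` converge in `L¹` to `travelingJump v w c`. The unit ball of `ℝ × ℝ` is the
square `(-1, 1)²`, so this is the condition `r⁻² ∫∫ |u (p + ·) - travelingJump v w c| → 0` over the
squares `(-r, r)²` after rescaling; the Lebesgue integral is used because it is never junk. -/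
def HasApproximateJump (u : ℝ × ℝ → E) (p : ℝ × ℝ) (v w : E) (c : ℝ) : Prop :=
  Tendsto (fun r : ℝ => ∫⁻ q in ball 0 1, ‖u (p + r • q) - travelingJump v w c q‖ₑ)
    (𝓝[>] 0) (𝓝 0)

lemma HasApproximateJump.comp {f : E → F} (hu : HasApproximateJump u p v w c)
    (hΩ : Ω ∈ 𝓝 p) (hv : ContinuousAt f v) (hw : ContinuousAt f w)
    (hbdd : eLpNorm (f ∘ u) ∞ (volume.restrict Ω) ≠ ∞) :
    HasApproximateJump (f ∘ u) p (f v) (f w) c := by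
  lift eLpNorm (f ∘ u) ∞ (volume.restrict Ω) to ℝ≥0 using hbdd with C hC
  rw [eLpNorm_exponent_top] at hC
  have hfu : ∀ᵐ q ∂volume.restrict Ω, ‖f (u q)‖ₑ ≤ C := hC ▸ ae_le_eLpNormEssSup
  have : Fact (volume (ball (0 : ℝ × ℝ) 1) < ∞) := ⟨measure_ball_lt_top⟩
  refine tendsto_lintegral_zero_of_le_add_mul hu fun ε hε => ?_
  obtain ⟨Kv, hKv⟩ := exists_enorm_sub_le_add_mul_of_continuousAt hv C hε
  obtain ⟨Kw, hKw⟩ := exists_enorm_sub_le_add_mul_of_continuousAt hw C hε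
  refine ⟨max Kv Kw, ?_⟩
  filter_upwards [eventually_quasiMeasurePreserving_const_add_smul_unitBall volume hΩ] with r hr
  filter_upwards [hr.ae hfu] with q hq
  rw [← comp_travelingJump]
  rcases ite_eq_or_eq (q.2 < c * q.1) v w with hleft | hright
  · rw [travelingJump, hleft]
    refine (hKv _ hq).trans ?_
    gcongr
    exact le_max_left _ _
  · rw [travelingJump, hright]
    refine (hKw _ hq).trans ?_
    gcongr
    exact le_max_right _ _

lemma IsWeakConservationLaw.rankine_hugoniot [NormedSpace ℝ E] [CompleteSpace E]
    {g : ℝ × ℝ → E} {v' w' : E} (h : IsWeakConservationLaw Ω u g) (hΩ : Ω ∈ 𝓝 p)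
    (hum : AEStronglyMeasurable u (volume.restrict Ω))
    (hgm : AEStronglyMeasurable g (volume.restrict Ω))
    (hu : HasApproximateJump u p v w c) (hg : HasApproximateJump g p v' w' c) :
    c • (w - v) = w' - v' := by
  have integrable_jump : ∀ a b : E, IntegrableOn (travelingJump a b c) (ball 0 1) := fun a b =>
    integrableOn_ball_of_locallyIntegrable (locallyIntegrable_travelingJump a b c) 0 1
  have hqmp := eventually_quasiMeasurePreserving_const_add_smul_unitBall volume hΩ
  have hlaw : ∀ᶠ r : ℝ in 𝓝[>] 0, IsWeakConservationLaw (ball 0 1)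
      (fun q => u (p + r • q)) (fun q => g (p + r • q)) := by
    filter_upwards [self_mem_nhdsWithin, eventually_mapsTo_const_add_smul_unitBall hΩ] with r hr hr'
    exact (h.comp_const_add_smul p hr.out.ne').mono hr'
  exact (of_tendsto hlaw (integrable_jump v w) (integrable_jump v' w')
    (hqmp.mono fun r hr => hum.comp_quasiMeasurePreserving hr)
    (hqmp.mono fun r hr => hgm.comp_quasiMeasurePreserving hr) hu hg).rankine_hugoniot_travelingJump
    (ball_mem_nhds 0 one_pos)

lemma setIntegral_ball_prod [NormedSpace ℝ E] {r : ℝ} (hr : 0 ≤ r)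
    (hu : IntegrableOn u (ball 0 r)) :
    ∫ q in ball 0 r, u q = ∫ t in (-r)..r, ∫ x in (-r)..r, u (t, x) := by
  have hball : ball (0 : ℝ × ℝ) r = Ioo (-r) r ×ˢ Ioo (-r) r := by
    rw [← Prod.mk_zero_zero, ← ball_prod_same, Real.ball_eq_Ioo, zero_sub, zero_add]
  have hle : -r ≤ r := neg_le_self hr
  rw [hball, Measure.volume_eq_prod] at hu ⊢
  simp only [setIntegral_prod _ hu, intervalIntegral.integral_of_le hle,
    integral_Ioc_eq_integral_Ioo]

lemma setLIntegral_comp_dilation_sub_travelingJump (hu : LocallyIntegrable u) {r : ℝ} (hr : 0 < r) :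
    ∫⁻ q in ball 0 1, ‖u (p + r • q) - travelingJump v w c q‖ₑ
      = ENNReal.ofReal ((1 / r ^ 2) * ∫ t in (-r)..r, ∫ x in (-r)..r,
          ‖u (p + (t, x)) - travelingJump v w c (t, x)‖) := by
  have hutrans : IntegrableOn (fun q => u (p + q)) (ball 0 r) := by
    have hball : ball 0 r = (fun q => p + q) ⁻¹' ball p r := by
      rw [preimage_add_ball, sub_self]
    rw [hball]
    exact ((measurePreserving_add_left volume p).integrableOn_comp_preimage
      (measurableEmbedding_addLeft p)).2 (integrableOn_ball_of_locallyIntegrable hu p r)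
  have hint : IntegrableOn (fun q => u (p + q) - travelingJump v w c q) (ball 0 r) :=
    hutrans.sub
      (integrableOn_ball_of_locallyIntegrable (locallyIntegrable_travelingJump v w c) 0 r)
  calc ∫⁻ q in ball 0 1, ‖u (p + r • q) - travelingJump v w c q‖ₑ
      = ∫⁻ q in ball 0 1, ‖u (p + r • q) - travelingJump v w c (r • q)‖ₑ := by
        simp only [travelingJump_smul v w c hr]
    _ = ENNReal.ofReal (r ^ 2)⁻¹ * ∫⁻ q in ball 0 r, ‖u (p + q) - travelingJump v w c q‖ₑ := by
        simpa only [finrank_prod, finrank_self] using setLIntegral_comp_smul_unitBall volume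
          (fun q => ‖u (p + q) - travelingJump v w c q‖ₑ) hr
    _ = _ := by
        rw [← ofReal_integral_norm_eq_lintegral_enorm hint, ← ENNReal.ofReal_mul (by positivity),
          setIntegral_ball_prod hr.le hint.norm, one_div]

lemma hasApproximateJump_of_tendsto_intervalIntegral (hu : LocallyIntegrable u)
    (hjump : Tendsto (fun r : ℝ => (1 / r ^ 2) * ∫ t in (-r)..r, ∫ x in (-r)..r,
      ‖u (p + (t, x)) - travelingJump v w c (t, x)‖) (𝓝[>] 0) (𝓝 0)) :
    HasApproximateJump u p v w c := by
  have hlim := ENNReal.tendsto_ofReal hjump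
  rw [ENNReal.ofReal_zero] at hlim
  refine hlim.congr' ?_
  filter_upwards [self_mem_nhdsWithin] with r hr
  exact (setLIntegral_comp_dilation_sub_travelingJump hu hr).symm

end ApproximateJump

theorem rankine_hugoniot_at_approximate_jump_general {E : Type*} [NormedAddCommGroup E]
    [NormedSpace ℝ E] [CompleteSpace E] {f : E → E} {Ω : Set (ℝ × ℝ)} {u : ℝ × ℝ → E}
    {p : ℝ × ℝ} {um up : E} {lam : ℝ} (hΩ : Ω ∈ 𝓝 p)
    (hfm : ContinuousAt f um) (hfp : ContinuousAt f up)
    (hu : AEStronglyMeasurable u (volume.restrict Ω))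
    (hfu : MemLp (f ∘ u) ∞ (volume.restrict Ω))
    (hweak : IsWeakConservationLaw Ω u (f ∘ u)) (hjump : HasApproximateJump u p um up lam) :
    lam • (up - um) = f up - f um :=
  hweak.rankine_hugoniot hΩ hu hfu.aestronglyMeasurable hjump
    (hjump.comp hΩ hfm hfp hfu.eLpNorm_ne_top)

/-- **Rankine–Hugoniot equations at a point of approximate jump.**
If `u` is a bounded weak solution of `u_t + f(u)_x = 0` on an open set `Ω ⊆ ℝ × ℝ`
and `u` has an approximate jump at `(τ,ξ) ∈ Ω` with left state `u⁻`, right state `u⁺`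
and speed `λ`, then `λ (u⁺ - u⁻) = f(u⁺) - f(u⁻)`. -/
theorem rankine_hugoniot_at_approximate_jump
    {n : ℕ} (f : EuclideanSpace ℝ (Fin n) → EuclideanSpace ℝ (Fin n))
    (hf : ContDiff ℝ 1 f)
    (Ω : Set (ℝ × ℝ)) (hΩ : IsOpen Ω)
    (u : ℝ × ℝ → EuclideanSpace ℝ (Fin n))
    (hmeas : Measurable u)
    (hbdd : ∃ C, ∀ p, ‖u p‖ ≤ C)
    (hweak : ∀ φ : ℝ × ℝ → ℝ, ContDiff ℝ 1 φ → HasCompactSupport φ →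
      tsupport φ ⊆ Ω →
      ∫ p : ℝ × ℝ, (ptime φ p • u p + pspace φ p • f (u p)) = 0)
    (τ ξ : ℝ) (hτξ : (τ, ξ) ∈ Ω)
    (um up : EuclideanSpace ℝ (Fin n)) (lam : ℝ) (hne : um ≠ up)
    (hjump : Tendsto
      (fun r : ℝ => (1 / r ^ 2) *
        ∫ t in (-r)..r, ∫ x in (-r)..r,
          ‖u (τ + t, ξ + x) - (if x < lam * t then um else up)‖)
      (𝓝[>] 0) (𝓝 0)) :
    lam • (up - um) = f up - f um := by
  obtain ⟨C, hC⟩ := hbdd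
  have hu : MemLp u ∞ := memLp_top_of_bound hmeas.aestronglyMeasurable C (ae_of_all _ hC)
  exact rankine_hugoniot_at_approximate_jump_general (hΩ.mem_nhds hτξ) hf.continuous.continuousAt
    hf.continuous.continuousAt hmeas.aestronglyMeasurable
    ((memLp_top_comp_of_continuous hf.continuous hu).restrict Ω) hweak
    (hasApproximateJump_of_tendsto_intervalIntegral (hu.locallyIntegrable le_top) hjump)
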